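/- Let M ∈ ℝ^{n×n} be an RDDL matrix with integer entries in [−U, U] for some integer U ≥ 2, let S ⊆ [n] with S̄ := [n] \ S nonempty, and let α be a positive integer. Assume that for every i ∈ S̄ there exist k ≤ α and indices i = v₀, v₁, …, v_{k−1} all lying in S̄ with M_{v_l, v_{l+1}} < 0 for 0 ≤ l < k−1, such that either M_{v_{k−1}, s} < 0 for some s ∈ S, or ∑_{j=1}^n M_{v_{k−1}, j} > 0. Let A := I − diag(M_{S̄,S̄})^{-1} M_{S̄,S̄}. Then: (a) ‖A^α‖_∞ ≤ 1 − U^{−α}; (b) I − A is invertible and ‖(I − A)^{-1}‖_∞ ≤ (α+1)·U^α; (c) M_{S̄,S̄} is invertible and its condition number satisfies κ(M_{S̄,S̄}) := ‖M_{S̄,S̄}‖₂·‖(M_{S̄,S̄})^{-1}‖₂ ≤ 2nU·(α+1)·U^α. -/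

import Mathlib

open Matrix

/-- A matrix `M` (over any finite index type) is an RDDL matrix. -/
def IsRDDL {ι : Type*} [Fintype ι] [DecidableEq ι] (M : Matrix ι ι ℝ) : Prop :=
  (∀ i, 0 < M i i) ∧ (∀ i j, i ≠ j → M i j ≤ 0) ∧
    (∀ i, ∑ j ∈ Finset.univ.erase i, |M i j| ≤ M i i)

/-- The submatrix `M_{S,T}` of `M` with rows indexed by `S` and columns indexed by `T`. -/
def submatrixOn {n : ℕ} (M : Matrix (Fin n) (Fin n) ℝ) (S T : Finset (Fin n)) :
    Matrix {i // i ∈ S} {j // j ∈ T} ℝ :=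
  Matrix.of fun i j => M i.val j.val

/-!
The matrix `A` is the transition matrix of a Markov chain on `S̄` that may be killed: its entries
are nonnegative and its rows sum to at most `1`. Diagonal entries of `M` lie between `1` and `U`,
so by integrality every edge of a path is followed with probability at least `U⁻¹`, and at the end
of the path the chain is killed with probability at least `U⁻¹`. Hence within `α` steps the chain
is killed with probability at least `U ^ (-α)` from any start, which is (a). Then (b) follows from
`(1 - A)⁻¹ = ∑ t < α, A ^ t + (1 - A)⁻¹ * A ^ α`, and (c) by comparing `ℓ₂` and `ℓ_∞` norms.
-/

section Substochastic

variable {ι R : Type*} [Fintype ι]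

lemma sum_row_mul [NonUnitalSemiring R] (A B : Matrix ι ι R) (i : ι) :
    ∑ k, (A * B) i k = ∑ j, A i j * ∑ k, B j k := by
  simp only [Matrix.mul_apply, Finset.mul_sum]
  exact Finset.sum_comm

/-- Nonnegative matrices whose rows sum to at most one: the transition matrices of Markov chains
that may be killed. Compare `Matrix.rowStochastic`. -/
def rowSubstochastic (R ι : Type*) [Fintype ι] [DecidableEq ι] [Ring R] [PartialOrder R]
    [IsOrderedRing R] : Submonoid (Matrix ι ι R) where
  carrier := {A | (∀ i j, 0 ≤ A i j) ∧ ∀ i, ∑ j, A i j ≤ 1}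
  mul_mem' {A B} hA hB := by
    refine ⟨fun i j => Finset.sum_nonneg fun k _ => mul_nonneg (hA.1 i k) (hB.1 k j), fun i => ?_⟩
    calc ∑ k, (A * B) i k = ∑ j, A i j * ∑ k, B j k := sum_row_mul A B i
      _ ≤ ∑ j, A i j := Finset.sum_le_sum fun j _ => mul_le_of_le_one_right (hA.1 i j) (hB.2 j)
      _ ≤ 1 := hA.2 i
  one_mem' := ⟨zero_le_one_elem, fun i => by simp [Matrix.one_apply]⟩

/-- The probability that a Markov chain with substochastic transition matrix `A` is killed in its
first step from `i`. Thus `killProb (A ^ t) i` is the probability of being killed within `t` steps.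
-/
def killProb [Ring R] (A : Matrix ι ι R) (i : ι) : R :=
  1 - ∑ j, A i j

lemma killProb_mul [Ring R] (A B : Matrix ι ι R) (i : ι) :
    killProb (A * B) i = killProb A i + ∑ j, A i j * killProb B j := by
  simp only [killProb, sum_row_mul, mul_sub, mul_one, Finset.sum_sub_distrib]
  abel

variable [DecidableEq ι] [Ring R] [PartialOrder R] [IsOrderedRing R]

lemma killProb_nonneg {A : Matrix ι ι R} (hA : A ∈ rowSubstochastic R ι) (i : ι) :
    0 ≤ killProb A i :=
  sub_nonneg.2 (hA.2 i)

lemma mul_killProb_le {A B : Matrix ι ι R} (hA : A ∈ rowSubstochastic R ι)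
    (hB : B ∈ rowSubstochastic R ι) (i j : ι) :
    A i j * killProb B j ≤ killProb (A * B) i := by
  rw [killProb_mul]
  exact (Finset.single_le_sum (fun k _ => mul_nonneg (hA.1 i k) (killProb_nonneg hB k))
    (Finset.mem_univ j)).trans (le_add_of_nonneg_left (killProb_nonneg hA i))

lemma killProb_pow_mono {A : Matrix ι ι R} (hA : A ∈ rowSubstochastic R ι) (i : ι) :
    Monotone fun t => killProb (A ^ t) i := by
  refine monotone_nat_of_le_succ fun t => ?_
  rw [pow_succ, killProb_mul]
  exact le_add_of_nonneg_right (Finset.sum_nonneg fun j _ =>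
    mul_nonneg ((pow_mem hA t).1 i j) (killProb_nonneg hA j))

lemma pow_le_killProb_pow_of_path {A : Matrix ι ι R} (hA : A ∈ rowSubstochastic R ι) {u : R}
    (hu : 0 ≤ u) {k : ℕ} (v : Fin (k + 1) → ι)
    (hstep : ∀ l : Fin k, u ≤ A (v l.castSucc) (v l.succ))
    (hlast : u ≤ killProb A (v (Fin.last k))) :
    u ^ (k + 1) ≤ killProb (A ^ (k + 1)) (v 0) := by
  induction k with
  | zero => simpa using hlast
  | succ k ih =>
    have htail : u ^ (k + 1) ≤ killProb (A ^ (k + 1)) (v (Fin.succ 0)) :=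
      ih (fun l => v l.succ) (fun l => by simpa using hstep l.succ) (by simpa using hlast)
    calc u ^ (k + 2) = u * u ^ (k + 1) := pow_succ' u (k + 1)
      _ ≤ A (v 0) (v (Fin.succ 0)) * killProb (A ^ (k + 1)) (v (Fin.succ 0)) :=
        mul_le_mul (hstep 0) htail (pow_nonneg hu _) (hA.1 _ _)
      _ ≤ killProb (A * A ^ (k + 1)) (v 0) := mul_killProb_le hA (pow_mem hA _) _ _
      _ = killProb (A ^ (k + 2)) (v 0) := by rw [← pow_succ']

end Substochastic

section NormedRing

variable {R : Type*} [NormedRing R] [HasSummableGeomSeries R] {a : R} {m : ℕ}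

lemma isUnit_one_sub_of_norm_pow_lt_one (h : ‖a ^ m‖ < 1) : IsUnit (1 - a) := by
  have hcomm : Commute (1 - a) (∑ t ∈ Finset.range m, a ^ t) :=
    (Commute.one_left _).sub_left
      (Commute.sum_right _ _ _ fun t _ => (Commute.refl a).pow_right t)
  have hunit : IsUnit ((1 - a) * ∑ t ∈ Finset.range m, a ^ t) := by
    rw [mul_neg_geom_sum]
    exact isUnit_one_sub_of_norm_lt_one h
  exact (hcomm.isUnit_mul_iff.1 hunit).1

lemma norm_inverse_one_sub_le [NormOneClass R] {δ : ℝ} (hδ : 0 < δ) (ha : ‖a‖ ≤ 1)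
    (hm : ‖a ^ m‖ ≤ 1 - δ) : ‖Ring.inverse (1 - a)‖ ≤ m / δ := by
  set b := Ring.inverse (1 - a)
  have hb : b * (1 - a) = 1 :=
    Ring.inverse_mul_cancel _ (isUnit_one_sub_of_norm_pow_lt_one (m := m) (by linarith))
  have hsplit : b = ∑ t ∈ Finset.range m, a ^ t + b * a ^ m := by
    have hgeom := congrArg (b * ·) (mul_neg_geom_sum a m)
    simp only [← mul_assoc, hb, one_mul, mul_sub, mul_one] at hgeom
    rw [hgeom, sub_add_cancel]
  have hsum : ‖∑ t ∈ Finset.range m, a ^ t‖ ≤ m := by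
    simpa using norm_sum_le_of_le (Finset.range m) fun t _ =>
      (norm_pow_le a t).trans (pow_le_one₀ (norm_nonneg a) ha)
  have hnorm : ‖b‖ ≤ m + ‖b‖ * (1 - δ) :=
    calc ‖b‖ = ‖∑ t ∈ Finset.range m, a ^ t + b * a ^ m‖ := congrArg norm hsplit
      _ ≤ ‖∑ t ∈ Finset.range m, a ^ t‖ + ‖b‖ * ‖a ^ m‖ :=
        norm_add_le_of_le le_rfl (norm_mul_le _ _)
      _ ≤ m + ‖b‖ * (1 - δ) := by gcongr
  rw [le_div_iff₀ hδ]
  linarith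

end NormedRing

section LinftyOpNorm

attribute [local instance] Matrix.linftyOpNormedRing Matrix.linftyOpNormedAlgebra

variable {ι : Type*} [Fintype ι] [DecidableEq ι]

lemma linftyOpNorm_le_iff [Nonempty ι] {R : Type*} [NormedRing R] {A : Matrix ι ι R} {r : ℝ} :
    ‖A‖ ≤ r ↔ ∀ i, ∑ j, ‖A i j‖ ≤ r := by
  rw [show ‖A‖ = ‖fun i => WithLp.toLp 1 (A i)‖ from rfl, pi_norm_le_iff_of_nonempty]
  simp only [PiLp.norm_eq_of_L1]

lemma linftyOpNorm_le_one_sub_iff [Nonempty ι] {A : Matrix ι ι ℝ}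
    (hA : A ∈ rowSubstochastic ℝ ι) {δ : ℝ} : ‖A‖ ≤ 1 - δ ↔ ∀ i, δ ≤ killProb A i := by
  rw [linftyOpNorm_le_iff]
  simp only [Real.norm_of_nonneg (hA.1 _ _), killProb, le_sub_comm]

lemma norm_toEuclideanCLM_le {𝕜 : Type*} [RCLike 𝕜] (A : Matrix ι ι 𝕜) :
    ‖Matrix.toEuclideanCLM (𝕜 := 𝕜) A‖ ≤ √(Fintype.card ι) * ‖A‖ := by
  refine ContinuousLinearMap.opNorm_le_bound _ (by positivity) fun x => ?_
  have hcoord (i : ι) : ‖(A *ᵥ x.ofLp) i‖ ≤ ‖A‖ * ‖x‖ :=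
    calc ‖(A *ᵥ x.ofLp) i‖ ≤ ‖A *ᵥ x.ofLp‖ := norm_le_pi_norm _ i
      _ ≤ ‖A‖ * ‖x.ofLp‖ := Matrix.linfty_opNorm_mulVec A x.ofLp
      _ ≤ ‖A‖ * ‖x‖ := by
        gcongr
        exact (pi_norm_le_iff_of_nonneg (norm_nonneg x)).2 (PiLp.norm_apply_le x)
  rw [EuclideanSpace.norm_eq, Matrix.ofLp_toEuclideanCLM]
  refine Real.sqrt_le_iff.2 ⟨by positivity, ?_⟩
  calc ∑ i, ‖(A *ᵥ x.ofLp) i‖ ^ 2 ≤ ∑ _i : ι, (‖A‖ * ‖x‖) ^ 2 := by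
        gcongr with i
        exact hcoord i
    _ = (√(Fintype.card ι) * ‖A‖ * ‖x‖) ^ 2 := by
        rw [mul_assoc, mul_pow (√_), Real.sq_sqrt (Nat.cast_nonneg _)]
        simp

lemma norm_toEuclideanCLM_mul_le {𝕜 : Type*} [RCLike 𝕜] (A B : Matrix ι ι 𝕜) :
    ‖Matrix.toEuclideanCLM (𝕜 := 𝕜) A‖ * ‖Matrix.toEuclideanCLM (𝕜 := 𝕜) B‖ ≤
      Fintype.card ι * (‖A‖ * ‖B‖) :=
  calc ‖Matrix.toEuclideanCLM (𝕜 := 𝕜) A‖ * ‖Matrix.toEuclideanCLM (𝕜 := 𝕜) B‖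
      ≤ (√(Fintype.card ι) * ‖A‖) * (√(Fintype.card ι) * ‖B‖) := by
        gcongr <;> exact norm_toEuclideanCLM_le _
    _ = (√(Fintype.card ι) * √(Fintype.card ι)) * (‖A‖ * ‖B‖) := by ring
    _ = Fintype.card ι * (‖A‖ * ‖B‖) := by rw [Real.mul_self_sqrt (Nat.cast_nonneg _)]

end LinftyOpNorm

lemma sum_eq_sum_comp_add_sum_compl {ι κ R : Type*} [Fintype ι] [DecidableEq ι] [Fintype κ]
    [AddCommMonoid R] {e : κ → ι} (he : Function.Injective e) (f : ι → R) :
    ∑ j, f j = ∑ k, f (e k) + ∑ j ∈ (Finset.univ.map ⟨e, he⟩)ᶜ, f j := by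
  rw [← Finset.sum_add_sum_compl (Finset.univ.map ⟨e, he⟩), Finset.sum_map]
  rfl

lemma isRDDL_iff_sum_row_nonneg {ι : Type*} [Fintype ι] [DecidableEq ι] {M : Matrix ι ι ℝ} :
    IsRDDL M ↔ (∀ i, 0 < M i i) ∧ (∀ i j, i ≠ j → M i j ≤ 0) ∧ ∀ i, 0 ≤ ∑ j, M i j := by
  refine and_congr_right fun _ => and_congr_right fun hoff => forall_congr' fun i => ?_
  have habs : ∑ j ∈ Finset.univ.erase i, |M i j| = -∑ j ∈ Finset.univ.erase i, M i j := by
    rw [← Finset.sum_neg_distrib]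
    exact Finset.sum_congr rfl fun j hj =>
      abs_of_nonpos (hoff i j (Finset.ne_of_mem_erase hj).symm)
  rw [habs, neg_le_iff_add_nonneg, Finset.add_sum_erase _ _ (Finset.mem_univ i)]

namespace IsRDDL

variable {ι κ : Type*} [Fintype ι] [DecidableEq ι] [Fintype κ] {M : Matrix ι ι ℝ} {e : κ → ι}

lemma sum_row_nonneg (hM : IsRDDL M) (i : ι) : 0 ≤ ∑ j, M i j :=
  (isRDDL_iff_sum_row_nonneg.1 hM).2.2 i

lemma sum_abs_row_le (hM : IsRDDL M) (i : ι) : ∑ j, |M i j| ≤ 2 * M i i := by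
  rw [← Finset.add_sum_erase _ _ (Finset.mem_univ i), abs_of_pos (hM.1 i), two_mul]
  gcongr
  exact hM.2.2 i

lemma sum_row_le_sum_row_submatrix (hM : IsRDDL M) (he : Function.Injective e) (i : κ) :
    ∑ j, M (e i) j ≤ ∑ k, M.submatrix e e i k := by
  rw [sum_eq_sum_comp_add_sum_compl he]
  exact add_le_of_nonpos_right (Finset.sum_nonpos fun j hj =>
    hM.2.1 _ _ fun h => Finset.mem_compl.1 hj (by simp [← h]))

lemma sum_row_lt_sum_row_submatrix (hM : IsRDDL M) (he : Function.Injective e) {i : κ}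
    {s : ι} (hs : s ∉ Set.range e) (hneg : M (e i) s < 0) :
    ∑ j, M (e i) j < ∑ k, M.submatrix e e i k := by
  rw [sum_eq_sum_comp_add_sum_compl he]
  exact add_lt_of_neg_right _ (Finset.sum_neg' (fun j hj =>
    hM.2.1 _ _ fun h => Finset.mem_compl.1 hj (by simp [← h])) ⟨s, by simpa using hs, hneg⟩)

protected lemma submatrix [DecidableEq κ] (hM : IsRDDL M) (he : Function.Injective e) :
    IsRDDL (M.submatrix e e) :=
  isRDDL_iff_sum_row_nonneg.2 ⟨fun i => hM.1 (e i), fun _ _ hij => hM.2.1 _ _ (he.ne hij), fun i =>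
    (hM.sum_row_nonneg (e i)).trans (hM.sum_row_le_sum_row_submatrix he i)⟩

lemma sum_row_submatrix_pos (hM : IsRDDL M) (he : Function.Injective e) {i : κ}
    (h : (∃ s ∉ Set.range e, M (e i) s < 0) ∨ 0 < ∑ j, M (e i) j) :
    0 < ∑ k, M.submatrix e e i k := by
  rcases h with ⟨s, hs, hneg⟩ | hpos
  · exact (hM.sum_row_nonneg (e i)).trans_lt (hM.sum_row_lt_sum_row_submatrix he hs hneg)
  · exact hpos.trans_le (hM.sum_row_le_sum_row_submatrix he i)

end IsRDDL

section Jacobi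

variable {ι K : Type*} [Fintype ι] [DecidableEq ι] [Field K]

/-- The iteration matrix `1 - D⁻¹ N` of Jacobi's method for `N`, where `D` is the diagonal of `N`.
-/
def jacobiMatrix (N : Matrix ι ι K) : Matrix ι ι K :=
  1 - Matrix.diagonal (fun i => (N i i)⁻¹) * N

lemma one_sub_jacobiMatrix (N : Matrix ι ι K) :
    1 - jacobiMatrix N = Matrix.diagonal (fun i => (N i i)⁻¹) * N :=
  sub_sub_cancel _ _

lemma jacobiMatrix_apply_self {N : Matrix ι ι K} {i : ι} (hi : N i i ≠ 0) :
    jacobiMatrix N i i = 0 := by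
  simp [jacobiMatrix, Matrix.diagonal_mul, hi]

lemma jacobiMatrix_apply_of_ne (N : Matrix ι ι K) {i j : ι} (hij : i ≠ j) :
    jacobiMatrix N i j = (N i i)⁻¹ * -N i j := by
  simp [jacobiMatrix, Matrix.diagonal_mul, hij]

lemma killProb_jacobiMatrix (N : Matrix ι ι K) (i : ι) :
    killProb (jacobiMatrix N) i = (N i i)⁻¹ * ∑ j, N i j := by
  simp [killProb, jacobiMatrix, Matrix.diagonal_mul, Matrix.one_apply, Finset.mul_sum]

lemma isUnit_of_isUnit_one_sub_jacobiMatrix {N : Matrix ι ι K}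
    (h : IsUnit (1 - jacobiMatrix N)) : IsUnit N := by
  rw [one_sub_jacobiMatrix, Matrix.isUnit_iff_isUnit_det, Matrix.det_mul] at h
  exact (Matrix.isUnit_iff_isUnit_det N).2 (isUnit_of_mul_isUnit_right h)

lemma inv_eq_inv_one_sub_jacobiMatrix_mul {N : Matrix ι ι K} (h : IsUnit (1 - jacobiMatrix N)) :
    N⁻¹ = (1 - jacobiMatrix N)⁻¹ * Matrix.diagonal fun i => (N i i)⁻¹ := by
  refine Matrix.inv_eq_left_inv ?_
  rw [mul_assoc, ← one_sub_jacobiMatrix]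
  exact Matrix.nonsing_inv_mul _ ((Matrix.isUnit_iff_isUnit_det _).1 h)

lemma IsRDDL.jacobiMatrix_mem_rowSubstochastic {N : Matrix ι ι ℝ} (hN : IsRDDL N) :
    jacobiMatrix N ∈ rowSubstochastic ℝ ι := by
  refine ⟨fun i j => ?_, fun i => sub_nonneg.1 ?_⟩
  · rcases eq_or_ne i j with rfl | hij
    · exact (jacobiMatrix_apply_self (hN.1 i).ne').ge
    · rw [jacobiMatrix_apply_of_ne N hij]
      exact mul_nonneg (inv_nonneg.2 (hN.1 i).le) (neg_nonneg.2 (hN.2.1 i j hij))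
  · change 0 ≤ killProb (jacobiMatrix N) i
    rw [killProb_jacobiMatrix]
    exact mul_nonneg (inv_nonneg.2 (hN.1 i).le) (hN.sum_row_nonneg i)

end Jacobi

section Walks

lemma one_le_of_mem_range_intCast {x : ℝ} (hx : x ∈ (Int.castRingHom ℝ).range) (hpos : 0 < x) :
    1 ≤ x := by
  obtain ⟨z, rfl⟩ := hx
  rw [eq_intCast] at hpos ⊢
  exact_mod_cast hpos

lemma inv_le_inv_mul_of_mem_range_intCast {d x U : ℝ} (hd : 0 < d) (hdU : d ≤ U)
    (hx : x ∈ (Int.castRingHom ℝ).range) (hpos : 0 < x) : U⁻¹ ≤ d⁻¹ * x :=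
  (inv_anti₀ hd hdU).trans
    (le_mul_of_one_le_right (inv_nonneg.2 hd.le) (one_le_of_mem_range_intCast hx hpos))

/-- In the digraph with an edge `i → j` whenever `N i j < 0`, there is a walk with at most `m`
vertices from `i` to a row of `N` with positive sum. For an RDDL matrix these are the rows from
which the chain with transition matrix `jacobiMatrix N` can be killed. -/
def ReachesPositiveRow {κ : Type*} [Fintype κ] (N : Matrix κ κ ℝ) (m : ℕ) (i : κ) : Prop :=
  ∃ k < m, ∃ v : Fin (k + 1) → κ, v 0 = i ∧
    (∀ l : Fin k, N (v l.castSucc) (v l.succ) < 0) ∧ 0 < ∑ j, N (v (Fin.last k)) j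

variable {ι : Type*} [Fintype ι] [DecidableEq ι] {U : ℝ} {m : ℕ}

lemma reachesPositiveRow_submatrix {M : Matrix ι ι ℝ} (hM : IsRDDL M) {S : Finset ι}
    (i : {i // i ∈ Sᶜ})
    (hpath : ∃ k : ℕ, k < m ∧ ∃ v : Fin (k + 1) → ι, v 0 = i ∧ (∀ l, v l ∈ Sᶜ) ∧
      (∀ l : Fin k, M (v l.castSucc) (v l.succ) < 0) ∧
      ((∃ s ∈ S, M (v (Fin.last k)) s < 0) ∨ 0 < ∑ j, M (v (Fin.last k)) j)) :
    ReachesPositiveRow (M.submatrix (Subtype.val : {i // i ∈ Sᶜ} → ι) Subtype.val) m i := by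
  obtain ⟨k, hkm, v, hv0, hvS, hstep, hlast⟩ := hpath
  refine ⟨k, hkm, fun l => ⟨v l, hvS l⟩, Subtype.ext hv0, hstep,
    hM.sum_row_submatrix_pos Subtype.val_injective (hlast.imp_left ?_)⟩
  rintro ⟨s, hs, hneg⟩
  exact ⟨s, by simpa using hs, hneg⟩

lemma inv_pow_le_killProb_jacobiMatrix_pow {N : Matrix ι ι ℝ} (hN : IsRDDL N)
    (hint : ∀ i j, N i j ∈ (Int.castRingHom ℝ).range) (hU : ∀ i, N i i ≤ U) {i : ι}
    (hi : ReachesPositiveRow N m i) : (U ^ m)⁻¹ ≤ killProb (jacobiMatrix N ^ m) i := by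
  obtain ⟨k, hkm, v, rfl, hstep, hlast⟩ := hi
  have hU1 : 1 ≤ U := (one_le_of_mem_range_intCast (hint _ _) (hN.1 (v 0))).trans (hU (v 0))
  have hJ := hN.jacobiMatrix_mem_rowSubstochastic
  have hedge (l : Fin k) : U⁻¹ ≤ jacobiMatrix N (v l.castSucc) (v l.succ) := by
    have hne : v l.castSucc ≠ v l.succ := fun h =>
      (hN.1 (v l.castSucc)).not_gt (by simpa only [← h] using hstep l)
    rw [jacobiMatrix_apply_of_ne N hne]
    exact inv_le_inv_mul_of_mem_range_intCast (hN.1 _) (hU _) (neg_mem (hint _ _))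
      (neg_pos.2 (hstep l))
  have hkill : U⁻¹ ≤ killProb (jacobiMatrix N) (v (Fin.last k)) := by
    rw [killProb_jacobiMatrix]
    exact inv_le_inv_mul_of_mem_range_intCast (hN.1 _) (hU _) (sum_mem fun j _ => hint _ j) hlast
  calc (U ^ m)⁻¹ ≤ (U ^ (k + 1))⁻¹ := inv_anti₀ (by positivity) (pow_le_pow_right₀ hU1 hkm)
    _ = U⁻¹ ^ (k + 1) := (inv_pow U (k + 1)).symm
    _ ≤ killProb (jacobiMatrix N ^ (k + 1)) (v 0) :=
      pow_le_killProb_pow_of_path hJ (by positivity) v hedge hkill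
    _ ≤ killProb (jacobiMatrix N ^ m) (v 0) := killProb_pow_mono hJ (v 0) hkm

end Walks

section ConditionNumber

attribute [local instance] Matrix.linftyOpNormedRing Matrix.linftyOpNormedAlgebra

variable {ι : Type*} [Fintype ι] [DecidableEq ι] [Nonempty ι] {N : Matrix ι ι ℝ} {U : ℝ} {m : ℕ}

lemma IsRDDL.linftyOpNorm_le_two_mul (hN : IsRDDL N) (hU : ∀ i, N i i ≤ U) : ‖N‖ ≤ 2 * U :=
  linftyOpNorm_le_iff.2 fun i => (hN.sum_abs_row_le i).trans (by gcongr; exact hU i)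

lemma linftyOpNorm_jacobiMatrix_pow_le (hN : IsRDDL N)
    (hint : ∀ i j, N i j ∈ (Int.castRingHom ℝ).range) (hU : ∀ i, N i i ≤ U)
    (hreach : ∀ i, ReachesPositiveRow N m i) : ‖jacobiMatrix N ^ m‖ ≤ 1 - (U ^ m)⁻¹ :=
  (linftyOpNorm_le_one_sub_iff (pow_mem (hN.jacobiMatrix_mem_rowSubstochastic) m)).2 fun i =>
    inv_pow_le_killProb_jacobiMatrix_pow hN hint hU (hreach i)

lemma linftyOpNorm_inv_one_sub_jacobiMatrix_le (hN : IsRDDL N) {δ : ℝ} (hδ : 0 < δ)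
    (hpow : ‖jacobiMatrix N ^ m‖ ≤ 1 - δ) : ‖(1 - jacobiMatrix N)⁻¹‖ ≤ m / δ := by
  have hJ := hN.jacobiMatrix_mem_rowSubstochastic
  have hnorm : ‖jacobiMatrix N‖ ≤ 1 := by
    simpa using (linftyOpNorm_le_one_sub_iff hJ).2 (killProb_nonneg hJ)
  rw [Matrix.nonsing_inv_eq_ringInverse]
  exact norm_inverse_one_sub_le hδ hnorm hpow

lemma linftyOpNorm_inv_le_inv_one_sub_jacobiMatrix (hdiag : ∀ i, 1 ≤ N i i)
    (h : IsUnit (1 - jacobiMatrix N)) : ‖N⁻¹‖ ≤ ‖(1 - jacobiMatrix N)⁻¹‖ := by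
  have hD : ‖Matrix.diagonal fun i => (N i i)⁻¹‖ ≤ 1 := by
    rw [Matrix.linfty_opNorm_diagonal, pi_norm_le_iff_of_nonempty]
    intro i
    rw [norm_inv]
    exact inv_le_one_of_one_le₀ ((hdiag i).trans (le_abs_self _))
  rw [inv_eq_inv_one_sub_jacobiMatrix_mul h]
  exact (norm_mul_le _ _).trans (mul_le_of_le_one_right (norm_nonneg _) hD)

end ConditionNumber

attribute [local instance] Matrix.linftyOpNormedRing Matrix.linftyOpNormedAlgebra in
theorem submatrix_condition_number_bound_general {ι : Type*} [Fintype ι] [DecidableEq ι] {U : ℝ}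
    {M : Matrix ι ι ℝ} (hM : IsRDDL M) (hint : ∀ i j, M i j ∈ (Int.castRingHom ℝ).range)
    (hU : ∀ i, M i i ≤ U) {S : Finset ι} (hSbar : Sᶜ.Nonempty) {α : ℕ}
    (hpath : ∀ i ∈ Sᶜ, ∃ k : ℕ, k < α ∧ ∃ v : Fin (k + 1) → ι, v 0 = i ∧ (∀ l, v l ∈ Sᶜ) ∧
      (∀ l : Fin k, M (v l.castSucc) (v l.succ) < 0) ∧
      ((∃ s ∈ S, M (v (Fin.last k)) s < 0) ∨ 0 < ∑ j, M (v (Fin.last k)) j))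
    {N A : Matrix {i // i ∈ Sᶜ} {i // i ∈ Sᶜ} ℝ} (hN : N = M.submatrix Subtype.val Subtype.val)
    (hA : A = jacobiMatrix N) :
    (∀ i, ∑ j, |(A ^ α) i j| ≤ 1 - (U ^ α)⁻¹) ∧
    (IsUnit (1 - A) ∧ ∀ i, ∑ j, |(1 - A)⁻¹ i j| ≤ α * U ^ α) ∧
    (IsUnit N ∧ ‖Matrix.toEuclideanCLM (𝕜 := ℝ) N‖ * ‖Matrix.toEuclideanCLM (𝕜 := ℝ) N⁻¹‖ ≤
      2 * Sᶜ.card * U * α * U ^ α) := by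
  subst hA
  have : Nonempty {i // i ∈ Sᶜ} := hSbar.to_subtype
  have hU0 : 0 < U := (hM.1 hSbar.choose).trans_le (hU _)
  have hNR : IsRDDL N := hN ▸ hM.submatrix Subtype.val_injective
  have hNint (i j) : N i j ∈ (Int.castRingHom ℝ).range := hN ▸ hint i j
  have hNU (i) : N i i ≤ U := hN ▸ hU i
  have hreach (i) : ReachesPositiveRow N α i := hN ▸ reachesPositiveRow_submatrix hM i (hpath i i.2)
  have hpow : ‖jacobiMatrix N ^ α‖ ≤ 1 - (U ^ α)⁻¹ :=
    linftyOpNorm_jacobiMatrix_pow_le hNR hNint hNU hreach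
  have hunit : IsUnit (1 - jacobiMatrix N) :=
    isUnit_one_sub_of_norm_pow_lt_one (hpow.trans_lt (sub_lt_self 1 (by positivity)))
  have hinv : ‖(1 - jacobiMatrix N)⁻¹‖ ≤ α * U ^ α := by
    rw [← div_inv_eq_mul]
    exact linftyOpNorm_inv_one_sub_jacobiMatrix_le hNR (by positivity) hpow
  have hNinv : ‖N⁻¹‖ ≤ α * U ^ α :=
    (linftyOpNorm_inv_le_inv_one_sub_jacobiMatrix
      (fun i => one_le_of_mem_range_intCast (hNint i i) (hNR.1 i)) hunit).trans hinv
  refine ⟨linftyOpNorm_le_iff.1 hpow, ⟨hunit, linftyOpNorm_le_iff.1 hinv⟩,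
    isUnit_of_isUnit_one_sub_jacobiMatrix hunit, (norm_toEuclideanCLM_mul_le N N⁻¹).trans ?_⟩
  calc (Fintype.card {i // i ∈ Sᶜ} : ℝ) * (‖N‖ * ‖N⁻¹‖)
      ≤ Sᶜ.card * (2 * U * (α * U ^ α)) := by
        rw [Fintype.card_coe]
        gcongr
        exact hNR.linftyOpNorm_le_two_mul hNU
    _ = 2 * Sᶜ.card * U * α * U ^ α := by ring

/-- If from every vertex of `S̄ = [n] \ S` there is a short (length `≤ α`) path inside `S̄`
reaching `S` or the dummy vertex, then for `A = I - diag(M_{S̄,S̄})⁻¹ M_{S̄,S̄}`: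
(a) `‖A^α‖_∞ ≤ 1 - U^{-α}` (every row of `A^α` has absolute sum at most `1 - U^{-α}`);
(b) `I - A` is invertible with `‖(I-A)⁻¹‖_∞ ≤ (α+1)·U^α`;
(c) `M_{S̄,S̄}` is invertible with condition number at most `2nU(α+1)U^α`. -/
theorem submatrix_condition_number_bound {n : ℕ} (U : ℕ) (hU : 2 ≤ U)
    (M : Matrix (Fin n) (Fin n) ℝ) (hM : IsRDDL M)
    (hint : ∀ i j, ∃ z : ℤ, M i j = (z : ℝ) ∧ |z| ≤ (U : ℤ))
    (S : Finset (Fin n)) (hSbar : (Sᶜ : Finset (Fin n)).Nonempty)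
    (α : ℕ) (hα : 1 ≤ α)
    (hpath : ∀ i ∈ Sᶜ, ∃ k : ℕ, k < α ∧ ∃ v : Fin (k + 1) → Fin n,
      v 0 = i ∧ (∀ l, v l ∈ (Sᶜ : Finset (Fin n))) ∧
      (∀ l : Fin k, M (v l.castSucc) (v l.succ) < 0) ∧
      ((∃ s ∈ S, M (v (Fin.last k)) s < 0) ∨ 0 < ∑ j, M (v (Fin.last k)) j))
    (A : Matrix {i // i ∈ (Sᶜ : Finset (Fin n))} {i // i ∈ (Sᶜ : Finset (Fin n))} ℝ)
    (hA : A = 1 - (Matrix.diagonal fun i : {i // i ∈ (Sᶜ : Finset (Fin n))} =>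
      (M i.val i.val)⁻¹) * submatrixOn M Sᶜ Sᶜ) :
    (∀ i, ∑ j, |(A ^ α) i j| ≤ 1 - ((U : ℝ) ^ α)⁻¹) ∧
    (IsUnit (1 - A) ∧ ∀ i, ∑ j, |(1 - A)⁻¹ i j| ≤ ((α : ℝ) + 1) * (U : ℝ) ^ α) ∧
    (IsUnit (submatrixOn M Sᶜ Sᶜ) ∧
      ‖Matrix.toEuclideanCLM (𝕜 := ℝ) (submatrixOn M Sᶜ Sᶜ)‖ *
        ‖Matrix.toEuclideanCLM (𝕜 := ℝ) (submatrixOn M Sᶜ Sᶜ)⁻¹‖ ≤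
        2 * (n : ℝ) * U * ((α : ℝ) + 1) * (U : ℝ) ^ α) := by
  have habs (i j) : |M i j| ≤ U := by
    obtain ⟨z, hz, hzU⟩ := hint i j
    rw [hz]
    exact_mod_cast hzU
  have hcard : (Sᶜ.card : ℝ) ≤ n := mod_cast card_finset_fin_le Sᶜ
  obtain ⟨hpow, ⟨hunit, hinv⟩, hN, hcond⟩ := submatrix_condition_number_bound_general hM
    (fun i j => (hint i j).imp fun z hz => hz.1.symm) (fun i => (le_abs_self _).trans (habs i i))
    hSbar hpath rfl hA
  exact ⟨hpow, ⟨hunit, fun i => (hinv i).trans (by gcongr; linarith)⟩, hN,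
    hcond.trans (by gcongr; linarith)⟩
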